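/- Suppose that for every complex number s with Re s > 1/2 and ξ(s) ≠ 0 one has Re(ξ'(s)/ξ(s)) > 0, where ξ(s) = s(s−1)π^{−s/2}Γ(s/2)ζ(s)/2. Then the Riemann Hypothesis holds: every zero ρ of ζ with 0 < Re ρ < 1 satisfies Re ρ = 1/2. -/

import Mathlib

open Complex Real

/-- The completed Riemann xi function `ξ(s) = s(s-1)π^{-s/2}Γ(s/2)ζ(s)/2`. -/
noncomputable def riemannXiFn (s : ℂ) : ℂ :=
  s * (s - 1) * (Real.pi : ℂ) ^ (-s / 2) * Complex.Gamma (s / 2) * riemannZeta s / 2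

/-!
If an analytic function `f` has a zero of finite order `n ≥ 1` at `z`, then
`(w - z) * (f' / f) w → n` as `w → z`, so `Re (f' / f)` is negative at the points immediately to
the left of `z`. Hence `Re (ξ' / ξ) ≥ 0` on `σ < Re s < 1` rules out zeros with `Re s > σ`, and the
functional equation then rules out zeros with `Re s < 1 - σ`.
-/

open Filter Topology

section LogDeriv

theorem tendsto_sub_mul_logDeriv {𝕜 : Type*} [NontriviallyNormedField 𝕜] [CompleteSpace 𝕜]
    {f : 𝕜 → 𝕜} {z : 𝕜} (hf : AnalyticAt 𝕜 f z) (hord : analyticOrderAt f z ≠ ⊤) :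
    Tendsto (fun w ↦ (w - z) * logDeriv f w) (𝓝[≠] z) (𝓝 (analyticOrderNatAt f z : 𝕜)) := by
  set n := analyticOrderNatAt f z
  obtain ⟨g, hg, hgz, hfg⟩ := hf.analyticOrderAt_ne_top.mp hord
  have hlog : ∀ᶠ w in 𝓝[≠] z, n + (w - z) * logDeriv g w = (w - z) * logDeriv f w := by
    filter_upwards [hfg.eventually_nhds.filter_mono nhdsWithin_le_nhds,
      hg.eventually_analyticAt.filter_mono nhdsWithin_le_nhds,
      (hg.continuousAt.eventually_ne hgz).filter_mono nhdsWithin_le_nhds,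
      self_mem_nhdsWithin] with w hfgw hgw hgw0 hwz
    have hsub : w - z ≠ 0 := sub_ne_zero.mpr hwz
    have hpow : logDeriv (fun v ↦ (v - z) ^ n) w = n / (w - z) := by
      rw [logDeriv_fun_pow (by fun_prop)]
      simp [logDeriv_apply, div_eq_mul_inv]
    simp only [smul_eq_mul] at hfgw
    rw [(logDeriv_congr_nhds hfgw).eq_of_nhds,
      logDeriv_mul (f := fun v ↦ (v - z) ^ n) w (pow_ne_zero n hsub) hgw0 (by fun_prop)
        hgw.differentiableAt, hpow]
    field
  have hlim : Tendsto (fun w ↦ n + (w - z) * logDeriv g w) (𝓝 z)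
      (𝓝 (n + (z - z) * logDeriv g z)) :=
    ((continuousAt_id.sub continuousAt_const).mul
      (hg.deriv.continuousAt.div hg.continuousAt hgz)).const_add _
  rw [sub_self, zero_mul, add_zero] at hlim
  exact (hlim.mono_left nhdsWithin_le_nhds).congr' hlog

theorem eventually_re_logDeriv_neg {f : ℂ → ℂ} {z : ℂ} (h0 : analyticOrderAt f z ≠ 0)
    (htop : analyticOrderAt f z ≠ ⊤) :
    ∀ᶠ t : ℝ in 𝓝[<] 0, (logDeriv f (z + t)).re < 0 := by
  have hord : (0 : ℝ) < analyticOrderNatAt f z := by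
    rw [Nat.cast_pos, Nat.pos_iff_ne_zero, analyticOrderNatAt, Ne, ENat.toNat_eq_zero]
    exact not_or.mpr ⟨h0, htop⟩
  have hpath : Tendsto (fun t : ℝ ↦ z + t) (𝓝[<] 0) (𝓝[≠] z) := by
    refine tendsto_nhdsWithin_iff.mpr ⟨?_, ?_⟩
    · exact ((by fun_prop : Continuous fun t : ℝ ↦ z + t).tendsto' 0 z (by simp)).mono_left
        nhdsWithin_le_nhds
    · filter_upwards [self_mem_nhdsWithin] with t ht
      simpa using ht.ne
  have hlim := (continuous_re.tendsto _).comp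
    ((tendsto_sub_mul_logDeriv (analyticOrderAt_ne_zero.mp h0).1 htop).comp hpath)
  rw [natCast_re] at hlim
  filter_upwards [hlim.eventually_const_lt hord, self_mem_nhdsWithin] with t hpos ht
  have hmul : 0 < t * (logDeriv f (z + t)).re := by simpa using hpos
  exact neg_of_mul_pos_right hmul ht.le

end LogDeriv

theorem analyticAt_Gammaℝ {s : ℂ} (hs : Gammaℝ s ≠ 0) : AnalyticAt ℂ Gammaℝ s := by
  simpa only [Pi.inv_def, inv_inv] using
    (differentiable_Gammaℝ_inv.analyticAt s).inv (inv_ne_zero hs)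

theorem analyticOrderAt_riemannZeta_ne_top {s : ℂ} (hs : s ≠ 1) :
    analyticOrderAt riemannZeta s ≠ ⊤ := by
  have hconn : IsPreconnected ({1}ᶜ : Set ℂ) :=
    (isConnected_compl_singleton_of_one_lt_rank (by simp [rank_real_complex]) 1).isPreconnected
  have hζ0 : analyticOrderAt riemannZeta 0 = 0 :=
    analyticOrderAt_eq_zero.mpr (.inr (by norm_num [riemannZeta_zero]))
  exact analyticOn_riemannZeta.analyticOrderAt_ne_top_of_isPreconnected hconn
    (by simp : (0 : ℂ) ∈ ({1}ᶜ : Set ℂ)) hs (by simp [hζ0])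

theorem riemannZeta_one_sub_eq_zero {s : ℂ} (hs : 0 < s.re) (hζ : riemannZeta s = 0) :
    riemannZeta (1 - s) = 0 := by
  have hpole (n : ℕ) : s ≠ -n := by
    rintro rfl
    rw [neg_re, natCast_re, neg_pos] at hs
    exact hs.not_ge n.cast_nonneg
  have hs1 : s ≠ 1 := fun h ↦ riemannZeta_one_ne_zero (h ▸ hζ)
  rw [riemannZeta_one_sub hpole hs1, hζ, mul_zero]

theorem riemannXiFn_eq_mul :
    riemannXiFn = (fun s ↦ s * (s - 1) * Gammaℝ s / 2) * riemannZeta := by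
  ext s
  simp only [riemannXiFn, Gammaℝ_def, Pi.mul_apply]
  ring

theorem analyticOrderAt_riemannXiFn {s : ℂ} (hs : 0 < s.re) (hs1 : s ≠ 1) :
    analyticOrderAt riemannXiFn s = analyticOrderAt riemannZeta s := by
  have hs0 : s ≠ 0 := ne_zero_of_re_pos hs
  have hΓ0 : Gammaℝ s ≠ 0 := Gammaℝ_ne_zero_of_re_pos hs
  have hΓ : AnalyticAt ℂ Gammaℝ s := analyticAt_Gammaℝ hΓ0
  have hfactor : AnalyticAt ℂ (fun s ↦ s * (s - 1) * Gammaℝ s / 2) s := by fun_prop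
  have hfactor0 : analyticOrderAt (fun s ↦ s * (s - 1) * Gammaℝ s / 2) s = 0 :=
    hfactor.analyticOrderAt_eq_zero.mpr (by simp [hs0, sub_ne_zero.mpr hs1, hΓ0])
  rw [riemannXiFn_eq_mul, analyticOrderAt_mul hfactor (analyticOn_riemannZeta s hs1), hfactor0,
    zero_add]

theorem eventually_re_logDeriv_riemannXiFn_neg {ρ : ℂ} (hζ : riemannZeta ρ = 0)
    (hρ : 0 < ρ.re) : ∀ᶠ t : ℝ in 𝓝[<] 0, (logDeriv riemannXiFn (ρ + t)).re < 0 := by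
  have hρ1 : ρ ≠ 1 := fun h ↦ riemannZeta_one_ne_zero (h ▸ hζ)
  have hord := analyticOrderAt_riemannXiFn hρ hρ1
  apply eventually_re_logDeriv_neg <;> rw [hord]
  · exact analyticOrderAt_ne_zero.mpr ⟨analyticOn_riemannZeta ρ hρ1, hζ⟩
  · exact analyticOrderAt_riemannZeta_ne_top hρ1

theorem re_le_of_re_logDeriv_riemannXiFn_nonneg {σ : ℝ}
    (hnonneg : ∀ s : ℂ, σ < s.re → s.re < 1 → riemannXiFn s ≠ 0 →
      0 ≤ (logDeriv riemannXiFn s).re)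
    {ρ : ℂ} (hζ : riemannZeta ρ = 0) (hρ : 0 < ρ.re) : ρ.re ≤ σ := by
  by_contra! hσ
  have hρ1 : ρ.re < 1 := lt_of_not_ge fun h ↦ riemannZeta_ne_zero_of_one_le_re h hζ
  obtain ⟨t, hneg, hσt, ht⟩ := ((eventually_re_logDeriv_riemannXiFn_neg hζ hρ).and
    (Ioo_mem_nhdsLT (sub_neg.mpr hσ))).exists
  have hre : (ρ + t).re = ρ.re + t := by rw [add_re, ofReal_re]
  have hξ : riemannXiFn (ρ + t) ≠ 0 := fun h ↦ by simp [logDeriv_apply, h] at hneg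
  exact hneg.not_ge (hnonneg (ρ + t) (by linarith) (by linarith) hξ)

theorem lagarias_positivity_implies_rh_general {σ : ℝ}
    (hnonneg : ∀ s : ℂ, σ < s.re → s.re < 1 → riemannXiFn s ≠ 0 →
      0 ≤ (logDeriv riemannXiFn s).re)
    {ρ : ℂ} (hζ : riemannZeta ρ = 0) (hρ : 0 < ρ.re) : ρ.re ∈ Set.Icc (1 - σ) σ := by
  have hright := re_le_of_re_logDeriv_riemannXiFn_nonneg hnonneg hζ hρ
  refine ⟨?_, hright⟩
  have hρ1 : ρ.re < 1 := lt_of_not_ge fun h ↦ riemannZeta_ne_zero_of_one_le_re h hζ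
  have hreflect : (1 - ρ).re ≤ σ := re_le_of_re_logDeriv_riemannXiFn_nonneg hnonneg
    (riemannZeta_one_sub_eq_zero hρ hζ) (by simpa using hρ1)
  rw [sub_re, one_re] at hreflect
  linarith

/-- Lagarias's criterion: if `Re(ξ'(s)/ξ(s)) > 0` for all `s` with `Re s > 1/2`
at which `ξ(s) ≠ 0`, then the Riemann Hypothesis holds. -/
theorem lagarias_positivity_implies_rh
    (hpos : ∀ s : ℂ, 1 / 2 < s.re → riemannXiFn s ≠ 0 →
      0 < (deriv riemannXiFn s / riemannXiFn s).re) :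
    ∀ ρ : ℂ, riemannZeta ρ = 0 → 0 < ρ.re → ρ.re < 1 → ρ.re = 1 / 2 := by
  intro ρ hζ hρ _
  have hmem := lagarias_positivity_implies_rh_general (fun s hs _ hξ ↦ (hpos s hs hξ).le) hζ hρ
  exact le_antisymm hmem.2 (by linarith [hmem.1])
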